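/- Let α > 3, β > 0, t₀ > 0, let Φ : H → ℝ be convex and twice continuously differentiable with argmin Φ nonempty and with ∇Φ Lipschitz continuous on bounded subsets of H, let g : [t₀, ∞) → H be continuous with ∫_{t₀}^∞ t‖g(t)‖ dt < ∞, and let x : [t₀, ∞) → H be a twice continuously differentiable curve satisfying the perturbed equation ẍ(t) + (α/t)ẋ(t) + β∇²Φ(x(t))ẋ(t) + ∇Φ(x(t)) = g(t) for all t ≥ t₀. Then there exists x∞ ∈ argmin Φ such that x(t) converges weakly to x∞ as t → ∞, i.e., ⟨x(t), y⟩ → ⟨x∞, y⟩ for every y ∈ H. -/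

import Mathlib

open Filter MeasureTheory Set
open scoped Topology RealInnerProductSpace

variable {H : Type*} [NormedAddCommGroup H] [InnerProductSpace ℝ H] [CompleteSpace H]

/-- `x`, together with its first and second derivatives `x'`, `x''`, is a twice continuously
differentiable solution of (DIN-AVD) on `[t₀, ∞)`:
`ẍ(t) + (α/t) ẋ(t) + β ∇²Φ(x(t)) ẋ(t) + ∇Φ(x(t)) = 0`. -/
def IsDINAVDSolution (α β t₀ : ℝ) (Φ : H → ℝ) (x x' x'' : ℝ → H) : Prop :=
  (∀ t ∈ Set.Ici t₀, HasDerivAt x (x' t) t) ∧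
  (∀ t ∈ Set.Ici t₀, HasDerivAt x' (x'' t) t) ∧
  ContinuousOn x'' (Set.Ici t₀) ∧
  ∀ t ∈ Set.Ici t₀,
    x'' t + (α / t) • x' t + β • (fderiv ℝ (gradient Φ) (x t)) (x' t)
      + gradient Φ (x t) = 0

/-!
Fix `z ∈ argmin Φ` and `2 < λ ≤ α - 1`, and write `v = λ (x - z) + t (ẋ + β ∇Φ(x))`. The function
`E_λ = ‖v‖² / 2 + λ (α - 1 - λ) / 2 ‖x - z‖² + t (t - β + (α - 1 - λ) β) (Φ(x) - Φ(z))` satisfies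
`Ė_λ ≤ -⟪∇Φ(x), x - z⟫ + t ‖g‖ (1 + E_λ)` for large `t`. Dividing by `1 + E_λ` and integrating,
`E_λ` converges and `⟪∇Φ(x), x - z⟫` is integrable; in particular `Φ(x) - Φ(z) = O(t⁻²)`.
As `E_λ` is affine in `λ`, its slope in `λ` also converges. Modulo the vanishing term
`β t (Φ(x) - Φ(z))` and a multiple of the convergent integral `W = ∫ ⟪∇Φ(x), x - z⟫`, this slope is
`(α - 1) p + t ṗ` for `p = ‖x - z‖² / 2 + β W`, so `p`, and with it `‖x - z‖`, converges. Weak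
cluster points of `x` minimize `Φ` because the convex function `Φ` is weakly lower semicontinuous,
and Opial's lemma concludes.
-/

section RealAsymptotics

variable {f φ D a : ℝ → ℝ} {T b : ℝ}

lemma eventually_sub_le_intervalIntegral (hf : ∀ᶠ t in atTop, DifferentiableAt ℝ f t)
    (hφ : LocallyIntegrableOn φ (Ici T)) (hle : ∀ᶠ t in atTop, deriv f t ≤ φ t) :
    ∀ᶠ s in atTop, ∀ t ≥ s, f t - f s ≤ ∫ u in s..t, φ u := by
  filter_upwards [eventually_ge_atTop T, eventually_forall_ge_atTop.2 (hf.and hle)]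
    with s hs h t hst
  have hφs : IntegrableOn φ (Icc s t) := hφ.integrableOn_compact_subset
    (Icc_subset_Ici_self.trans (Ici_subset_Ici.2 hs)) isCompact_Icc
  exact intervalIntegral.sub_le_integral_of_hasDeriv_right_of_le hst
    (fun u hu ↦ (h u hu.1).1.continuousAt.continuousWithinAt)
    (fun u hu ↦ (h u hu.1.le).1.hasDerivAt.hasDerivWithinAt) hφs fun u hu ↦ (h u hu.1.le).2

lemma tendsto_atTop_of_antitoneOn_Ici (hf : AntitoneOn f (Ici T)) :
    Tendsto f atTop atBot ∨ ∃ l, Tendsto f atTop (𝓝 l) := by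
  have hmax : Antitone fun t ↦ f (max T t) := fun s t hst ↦
    hf (le_max_left T s) (le_max_left T t) (max_le_max_left T hst)
  have heq : (fun t ↦ f (max T t)) =ᶠ[atTop] f := by
    filter_upwards [eventually_ge_atTop T] with t ht
    rw [max_eq_right ht]
  simpa only [tendsto_congr' heq] using tendsto_atTop_of_antitone hmax

lemma exists_tendsto_of_deriv_le (hf : ∀ᶠ t in atTop, DifferentiableAt ℝ f t)
    (hb : ∀ᶠ t in atTop, b ≤ f t) (hφ : IntegrableOn φ (Ici T))
    (hle : ∀ᶠ t in atTop, deriv f t ≤ φ t) : ∃ l, Tendsto f atTop (𝓝 l) := by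
  obtain ⟨S, hTS, hS⟩ := ((eventually_ge_atTop T).and (eventually_forall_ge_atTop.2
    (eventually_sub_le_intervalIntegral hf hφ.locallyIntegrableOn hle))).exists
  have hint (s t : ℝ) (hs : S ≤ s) (ht : S ≤ t) : IntervalIntegrable φ volume s t :=
    (hφ.mono_set fun u hu ↦ hTS.trans ((le_min hs ht).trans hu.1)).intervalIntegrable
  have hanti : AntitoneOn (fun t ↦ f t - ∫ u in S..t, φ u) (Ici S) := by
    intro s hs t ht hst
    have hadd := intervalIntegral.integral_add_adjacent_intervals
      (hint S s le_rfl hs) (hint s t hs ht)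
    linarith [hS s hs t hst]
  have hlim : Tendsto (fun t ↦ ∫ u in S..t, φ u) atTop (𝓝 (∫ u in Ioi S, φ u)) :=
    intervalIntegral_tendsto_integral_Ioi S
      (hφ.mono_set (Ioi_subset_Ici_self.trans (Ici_subset_Ici.2 hTS))) tendsto_id
  rcases tendsto_atTop_of_antitoneOn_Ici hanti with hbot | ⟨l, hl⟩
  · have hfbot : Tendsto f atTop atBot :=
      (hbot.atBot_add hlim).congr fun t ↦ sub_add_cancel _ _
    obtain ⟨t, hbt, htb⟩ := (hb.and (hfbot.eventually_lt_atBot b)).exists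
    exact absurd htb hbt.not_gt
  · exact ⟨_, (hl.add hlim).congr fun t ↦ sub_add_cancel _ _⟩

lemma intervalIntegral_le_integral_Ici_norm {s t : ℝ} (hφ : IntegrableOn φ (Ici T)) (hTs : T ≤ s)
    (hst : s ≤ t) : ∫ u in s..t, φ u ≤ ∫ u in Ici T, ‖φ u‖ := by
  have hIoc : Ioc s t ⊆ Ici T :=
    Ioc_subset_Ioi_self.trans (Ioi_subset_Ici_self.trans (Ici_subset_Ici.2 hTs))
  have hnorm : IntegrableOn (fun u ↦ ‖φ u‖) (Ici T) := hφ.norm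
  calc ∫ u in s..t, φ u = ∫ u in Ioc s t, φ u := intervalIntegral.integral_of_le hst
    _ ≤ ∫ u in Ioc s t, ‖φ u‖ :=
      integral_mono (hφ.mono_set hIoc) (hnorm.mono_set hIoc) fun u ↦ Real.le_norm_self _
    _ ≤ ∫ u in Ici T, ‖φ u‖ := setIntegral_mono_set hnorm
      (Eventually.of_forall fun u ↦ norm_nonneg _) hIoc.eventuallyLE

lemma integrableOn_of_deriv_le_sub (hf : ∀ᶠ t in atTop, DifferentiableAt ℝ f t)
    (hb : ∀ᶠ t in atTop, b ≤ f t) (hφ : IntegrableOn φ (Ici T))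
    (hD : LocallyIntegrableOn D (Ici T)) (hD0 : ∀ᶠ t in atTop, 0 ≤ D t)
    (hle : ∀ᶠ t in atTop, deriv f t ≤ φ t - D t) : IntegrableOn D (Ici T) := by
  obtain ⟨S, hTS, hS, hD0, hb⟩ := ((eventually_ge_atTop T).and
    ((eventually_sub_le_intervalIntegral hf (hφ.locallyIntegrableOn.sub hD) hle).and
      ((eventually_forall_ge_atTop.2 hD0).and (eventually_forall_ge_atTop.2 hb)))).exists
  have hsub {t : ℝ} : Icc S t ⊆ Ici T := Icc_subset_Ici_self.trans (Ici_subset_Ici.2 hTS)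
  have hDS (t : ℝ) : IntegrableOn D (Icc S t) :=
    hD.integrableOn_compact_subset hsub isCompact_Icc
  have hbound : ∀ᶠ t in atTop, ∫ u in S..t, ‖D u‖ ≤ f S - b + ∫ u in Ici T, ‖φ u‖ := by
    filter_upwards [eventually_ge_atTop S] with t ht
    have hDt : ∫ u in S..t, ‖D u‖ = ∫ u in S..t, D u :=
      intervalIntegral.integral_congr fun u hu ↦
        Real.norm_of_nonneg (hD0 u (by rw [uIcc_of_le ht] at hu; exact hu.1))
    have hsplit : ∫ u in S..t, (φ u - D u) = (∫ u in S..t, φ u) - ∫ u in S..t, D u := by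
      rw [intervalIntegral.integral_sub]
      · exact ((hφ.mono_set hsub).mono_set (uIcc_of_le ht).subset).intervalIntegrable
      · exact ((hDS t).mono_set (uIcc_of_le ht).subset).intervalIntegrable
    have hdecay : f t - f S ≤ ∫ u in S..t, (φ u - D u) := hS t ht
    linarith [hb t ht, intervalIntegral_le_integral_Ici_norm hφ hTS ht]
  have hDat : IntegrableAtFilter D atTop := ⟨Ioi S, Ioi_mem_atTop S,
    integrableOn_Ioi_of_intervalIntegral_norm_bounded _ S
      (fun t ↦ (hDS t).mono_set Ioc_subset_Icc_self) tendsto_id hbound⟩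
  exact integrableOn_Ici_iff_integrableAtFilter_atTop.2 ⟨hDat, hD⟩

lemma deriv_log_one_add_le {r t : ℝ} (hf : DifferentiableAt ℝ f t) (hf0 : 0 ≤ f t)
    (hle : deriv f t ≤ r * (1 + f t)) : deriv (fun s ↦ Real.log (1 + f s)) t ≤ r := by
  rwa [deriv.log (hf.const_add 1) (by positivity), deriv_const_add, div_le_iff₀ (by positivity)]

lemma exists_tendsto_of_deriv_le_mul_one_add (hf : ∀ᶠ t in atTop, DifferentiableAt ℝ f t)
    (hf0 : ∀ᶠ t in atTop, 0 ≤ f t) (ha : IntegrableOn a (Ici T))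
    (hle : ∀ᶠ t in atTop, deriv f t ≤ a t * (1 + f t)) : ∃ l, Tendsto f atTop (𝓝 l) := by
  obtain ⟨l, hl⟩ : ∃ l, Tendsto (fun t ↦ Real.log (1 + f t)) atTop (𝓝 l) := by
    refine exists_tendsto_of_deriv_le (b := 0) ?_ ?_ ha ?_
    · filter_upwards [hf, hf0] with t hft h0
      exact (hft.const_add 1).log (by positivity)
    · filter_upwards [hf0] with t h0
      exact Real.log_nonneg (by linarith)
    · filter_upwards [hf, hf0, hle] with t hft h0 hlet
      exact deriv_log_one_add_le hft h0 hlet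
  refine ⟨Real.exp l - 1, (hl.rexp.sub_const 1).congr' ?_⟩
  filter_upwards [hf0] with t h0
  rw [Real.exp_log (by positivity), add_sub_cancel_left]

lemma integrableOn_of_deriv_le_mul_one_add_sub (hf : ∀ᶠ t in atTop, DifferentiableAt ℝ f t)
    (hf0 : ∀ᶠ t in atTop, 0 ≤ f t) (ha : IntegrableOn a (Ici T))
    (hD : ContinuousOn D (Ici T)) (hD0 : ∀ᶠ t in atTop, 0 ≤ D t)
    (hle : ∀ᶠ t in atTop, deriv f t ≤ a t * (1 + f t) - D t) : IntegrableOn D (Ici T) := by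
  obtain ⟨l, hl⟩ : ∃ l, Tendsto f atTop (𝓝 l) := by
    refine exists_tendsto_of_deriv_le_mul_one_add hf hf0 ha ?_
    filter_upwards [hD0, hle] with t h0 hlet
    linarith
  obtain ⟨S, hTS, hS⟩ := ((eventually_ge_atTop T).and
    (eventually_forall_ge_atTop.2 (hf.and hf0))).exists
  have hcont : ContinuousOn (fun t ↦ D t / (1 + f t)) (Ici S) :=
    (hD.mono (Ici_subset_Ici.2 hTS)).div
      (fun t ht ↦ ((hS t ht).1.continuousAt.const_add 1).continuousWithinAt)
      fun t ht ↦ by have := (hS t ht).2; positivity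
  have hquot : IntegrableOn (fun t ↦ D t / (1 + f t)) (Ici S) := by
    refine integrableOn_of_deriv_le_sub (f := fun t ↦ Real.log (1 + f t)) (b := 0) ?_ ?_
      (ha.mono_set (Ici_subset_Ici.2 hTS)) (hcont.locallyIntegrableOn measurableSet_Ici) ?_ ?_
    · filter_upwards [hf, hf0] with t hft h0
      exact (hft.const_add 1).log (by positivity)
    · filter_upwards [hf0] with t h0
      exact Real.log_nonneg (by linarith)
    · filter_upwards [hf0, hD0] with t h0 hDt
      positivity
    · filter_upwards [hf, hf0, hle] with t hft h0 hlet
      refine deriv_log_one_add_le hft h0 ?_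
      rwa [sub_mul, div_mul_cancel₀ _ (by positivity)]
  refine (hD.locallyIntegrableOn measurableSet_Ici).integrableOn_of_isBigO_atTop ?_
    ⟨Ici S, Ici_mem_atTop S, hquot⟩
  have hO := ((hl.const_add 1).isBigO_one ℝ).mul
    (Asymptotics.isBigO_refl (fun t ↦ D t / (1 + f t)) atTop)
  refine hO.congr' ?_ (Eventually.of_forall fun t ↦ one_mul _)
  filter_upwards [hf0] with t h0
  exact mul_div_cancel₀ _ (by positivity)

lemma eventually_lt_of_mul_add_mul_deriv_le {p p' : ℝ → ℝ} {c l m : ℝ} (hc : 0 < c) (hlm : l < m)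
    (hp : ∀ᶠ t in atTop, HasDerivAt p (p' t) t)
    (hle : ∀ᶠ t in atTop, c * p t + t * p' t ≤ c * l) : ∀ᶠ t in atTop, p t < m := by
  obtain ⟨S, hS0, hS⟩ := ((eventually_gt_atTop (0 : ℝ)).and
    (eventually_forall_ge_atTop.2 (hp.and hle))).exists
  have hderiv (t : ℝ) (ht : S ≤ t) : HasDerivAt (fun t ↦ t ^ c * (p t - l))
      (t ^ (c - 1) * (c * p t + t * p' t - c * l)) t := by
    have ht0 : 0 < t := hS0.trans_le ht
    refine ((Real.hasDerivAt_rpow_const (Or.inl ht0.ne')).mul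
      ((hS t ht).1.sub_const l)).congr_deriv ?_
    rw [Real.rpow_sub_one ht0.ne']
    field_simp
    ring
  have hanti : AntitoneOn (fun t ↦ t ^ c * (p t - l)) (Ici S) := by
    refine antitoneOn_of_hasDerivWithinAt_nonpos (convex_Ici S)
      (fun t ht ↦ (hderiv t ht).continuousAt.continuousWithinAt)
      (fun t ht ↦ (hderiv t (interior_subset ht)).hasDerivWithinAt) fun t ht ↦ ?_
    have hSt : S ≤ t := interior_subset ht
    exact mul_nonpos_of_nonneg_of_nonpos (Real.rpow_nonneg (hS0.le.trans hSt) _)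
      (sub_nonpos.2 (hS t hSt).2)
  have hlim : Tendsto (fun t : ℝ ↦ S ^ c * (p S - l) / t ^ c) atTop (𝓝 0) :=
    (tendsto_rpow_atTop hc).const_div_atTop _
  filter_upwards [hlim.eventually_lt_const (sub_pos.2 hlm), eventually_ge_atTop S] with t hlt ht
  have htc : 0 < t ^ c := Real.rpow_pos_of_pos (hS0.trans_le ht) c
  have hle' : p t - l ≤ S ^ c * (p S - l) / t ^ c := by
    rw [le_div_iff₀ htc, mul_comm]
    exact hanti self_mem_Ici ht ht
  linarith

lemma tendsto_div_of_tendsto_mul_add_mul_deriv {p p' : ℝ → ℝ} {c l : ℝ} (hc : 0 < c)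
    (hp : ∀ᶠ t in atTop, HasDerivAt p (p' t) t)
    (h : Tendsto (fun t ↦ c * p t + t * p' t) atTop (𝓝 l)) : Tendsto p atTop (𝓝 (l / c)) := by
  refine tendsto_order.2 ⟨fun b hb ↦ ?_, fun b hb ↦ ?_⟩
  · obtain ⟨m, hbm, hml⟩ := exists_between hb
    have hneg : ∀ᶠ t in atTop, c * -p t + t * -p' t ≤ c * -m := by
      filter_upwards [h.eventually_const_lt ((lt_div_iff₀' hc).1 hml)] with t ht
      linarith
    filter_upwards [eventually_lt_of_mul_add_mul_deriv_le hc (neg_lt_neg hbm)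
      (hp.mono fun t ht ↦ ht.fun_neg) hneg] with t ht
    exact neg_lt_neg_iff.1 ht
  · obtain ⟨m, hlm, hmb⟩ := exists_between hb
    refine eventually_lt_of_mul_add_mul_deriv_le hc hmb hp ?_
    filter_upwards [h.eventually_lt_const ((div_lt_iff₀' hc).1 hlm)] with t ht
    exact ht.le

end RealAsymptotics

section Convexity

lemma add_fderiv_sub_le_of_convexOn {E : Type*} [NormedAddCommGroup E] [NormedSpace ℝ E]
    {s : Set E} {f : E → ℝ} (hf : ConvexOn ℝ s f) {z y : E} (hz : z ∈ s) (hy : y ∈ s)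
    (hd : DifferentiableAt ℝ f z) : f z + fderiv ℝ f z (y - z) ≤ f y := by
  have hline : ConvexOn ℝ (AffineMap.lineMap z y ⁻¹' s) (f ∘ AffineMap.lineMap (k := ℝ) z y) :=
    hf.comp_affineMap (AffineMap.lineMap z y)
  have hderiv : HasDerivAt (f ∘ AffineMap.lineMap (k := ℝ) z y) (fderiv ℝ f z (y - z)) 0 := by
    refine HasFDerivAt.comp_hasDerivAt (0 : ℝ) ?_ AffineMap.hasDerivAt_lineMap
    rw [AffineMap.lineMap_apply_zero]
    exact hd.hasFDerivAt
  have hslope := hline.le_slope_of_hasDerivAt (x := 0) (y := 1) (by simpa using hz)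
    (by simpa using hy) one_pos hderiv
  simp only [slope_def_field, Function.comp_apply, AffineMap.lineMap_apply_one,
    AffineMap.lineMap_apply_zero, sub_zero, div_one] at hslope
  linarith

lemma add_inner_gradient_sub_le_of_convexOn {s : Set H} {f : H → ℝ} (hf : ConvexOn ℝ s f)
    {z y : H} (hz : z ∈ s) (hy : y ∈ s) (hd : DifferentiableAt ℝ f z) :
    f z + ⟪gradient f z, y - z⟫ ≤ f y := by
  rw [inner_gradient_left]
  exact add_fderiv_sub_le_of_convexOn hf hz hy hd

lemma le_of_tendsto_inner_of_convexOn {ι : Type*} {l : Filter ι} [l.NeBot] {s : Set H}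
    {f : H → ℝ} (hf : ConvexOn ℝ s f) {x : ι → H} (hxs : ∀ᶠ i in l, x i ∈ s) {z : H} (hz : z ∈ s)
    (hd : DifferentiableAt ℝ f z) (hx : ∀ y, Tendsto (fun i ↦ ⟪x i, y⟫) l (𝓝 ⟪z, y⟫))
    {m : ℝ} (hm : Tendsto (fun i ↦ f (x i)) l (𝓝 m)) : f z ≤ m := by
  have htangent : Tendsto (fun i ↦ f z + ⟪gradient f z, x i - z⟫) l (𝓝 (f z)) := by
    have h := ((hx (gradient f z)).sub_const ⟪z, gradient f z⟫).const_add (f z)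
    simpa only [← inner_sub_left, real_inner_comm, sub_self, inner_zero_right, add_zero] using h
  exact le_of_tendsto_of_tendsto htangent hm <| hxs.mono fun i hi ↦
    add_inner_gradient_sub_le_of_convexOn hf hz hi hd

end Convexity

section WeakConvergence

variable {ι : Type*} {l : Filter ι}

lemma exists_tendsto_inner_of_eventually_norm_le {U : Ultrafilter ι} {x : ι → H} {C : ℝ}
    (hx : ∀ᶠ i in (U : Filter ι), ‖x i‖ ≤ C) :
    ∃ z : H, ∀ y, Tendsto (fun i ↦ ⟪x i, y⟫) U (𝓝 ⟪z, y⟫) := by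
  let φ : ι → WeakDual ℝ H := fun i ↦
    StrongDual.toWeakDual (InnerProductSpace.toDual ℝ H (x i))
  have hφ : ∀ᶠ i in (U : Filter ι), φ i ∈ WeakDual.toStrongDual ⁻¹' Metric.closedBall 0 C := by
    filter_upwards [hx] with i hi
    simpa [φ] using hi
  obtain ⟨f, -, hf⟩ := isCompact_iff_ultrafilter_le_nhds.1
    (WeakDual.isCompact_closedBall (𝕜 := ℝ) (E := H) 0 C) (U.map φ) (le_principal_iff.2 hφ)
  refine ⟨(InnerProductSpace.toDual ℝ H).symm (WeakDual.toStrongDual f), fun y ↦ ?_⟩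
  simpa [φ, Function.comp_def] using ((WeakDual.eval_continuous y).tendsto f).comp hf

lemma eq_of_tendsto_inner_of_tendsto_norm_sub {E : Type*} [NormedAddCommGroup E]
    [InnerProductSpace ℝ E] {U V : Filter ι} [U.NeBot] [V.NeBot] (hU : U ≤ l) (hV : V ≤ l)
    {x : ι → E} {z w : E} {a b : ℝ} (hz : ∀ y, Tendsto (fun i ↦ ⟪x i, y⟫) U (𝓝 ⟪z, y⟫))
    (hw : ∀ y, Tendsto (fun i ↦ ⟪x i, y⟫) V (𝓝 ⟪w, y⟫))
    (ha : Tendsto (fun i ↦ ‖x i - z‖) l (𝓝 a)) (hb : Tendsto (fun i ↦ ‖x i - w‖) l (𝓝 b)) :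
    z = w := by
  have hlim : Tendsto (fun i ↦ ⟪x i, z - w⟫) l
      (𝓝 ((b ^ 2 - a ^ 2 + ‖z‖ ^ 2 - ‖w‖ ^ 2) / 2)) := by
    refine (((((hb.pow 2).sub (ha.pow 2)).add_const (‖z‖ ^ 2)).sub_const
      (‖w‖ ^ 2)).div_const 2).congr fun i ↦ ?_
    rw [norm_sub_sq_real, norm_sub_sq_real, inner_sub_right]
    ring
  have heq : ⟪z, z - w⟫ = ⟪w, z - w⟫ :=
    (tendsto_nhds_unique (hz _) (hlim.mono_left hU)).trans
      (tendsto_nhds_unique (hw _) (hlim.mono_left hV)).symm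
  rw [← sub_eq_zero, ← inner_self_eq_zero (𝕜 := ℝ), inner_sub_left, heq, sub_self]

/-- Opial's lemma. -/
lemma exists_tendsto_inner_of_tendsto_norm_sub [l.NeBot] {x : ι → H} {S : Set H} (hS : S.Nonempty)
    (hnorm : ∀ z ∈ S, ∃ a, Tendsto (fun i ↦ ‖x i - z‖) l (𝓝 a))
    (hcluster : ∀ (U : Ultrafilter ι) (z : H), ↑U ≤ l →
      (∀ y, Tendsto (fun i ↦ ⟪x i, y⟫) U (𝓝 ⟪z, y⟫)) → z ∈ S) :
    ∃ z ∈ S, ∀ y, Tendsto (fun i ↦ ⟪x i, y⟫) l (𝓝 ⟪z, y⟫) := by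
  obtain ⟨z₀, hz₀⟩ := hS
  obtain ⟨a₀, ha₀⟩ := hnorm z₀ hz₀
  have hbdd : ∀ᶠ i in l, ‖x i‖ ≤ a₀ + 1 + ‖z₀‖ := by
    filter_upwards [ha₀.eventually_le_const (lt_add_one a₀)] with i hi
    linarith [norm_le_norm_sub_add (x i) z₀]
  have hex (U : Ultrafilter ι) (hU : ↑U ≤ l) :
      ∃ z ∈ S, ∀ y, Tendsto (fun i ↦ ⟪x i, y⟫) U (𝓝 ⟪z, y⟫) := by
    obtain ⟨z, hz⟩ := exists_tendsto_inner_of_eventually_norm_le (hU hbdd)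
    exact ⟨z, hcluster U z hU hz, hz⟩
  obtain ⟨z, hzS, hz⟩ := hex (Ultrafilter.of l) (Ultrafilter.of_le l)
  obtain ⟨a, ha⟩ := hnorm z hzS
  refine ⟨z, hzS, fun y ↦ (tendsto_iff_ultrafilter _ _ _).2 fun U hU ↦ ?_⟩
  obtain ⟨w, hwS, hw⟩ := hex U hU
  obtain ⟨b, hb⟩ := hnorm w hwS
  rw [eq_of_tendsto_inner_of_tendsto_norm_sub (Ultrafilter.of_le l) hU hz hw ha hb]
  exact hw y

end WeakConvergence

/-- The perturbed equation (DIN-AVD) with source term `g` on `[t₀, ∞)`, solved by `x`. As in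
`IsDINAVDSolution`, the derivatives `x'`, `x''` of `x` are part of the data and are two-sided, also
at `t₀`. -/
structure IsPerturbedDINAVDSolution (α β t₀ : ℝ) (Φ : H → ℝ) (g x x' x'' : ℝ → H) : Prop where
  hasDerivAt : ∀ t ∈ Ici t₀, HasDerivAt x (x' t) t
  hasDerivAt_velocity : ∀ t ∈ Ici t₀, HasDerivAt x' (x'' t) t
  equation : ∀ t ∈ Ici t₀, x'' t + (α / t) • x' t + β • fderiv ℝ (gradient Φ) (x t) (x' t)
    + gradient Φ (x t) = g t

/-- The vector `λ (x - z) + t (ẋ + β ∇Φ(x))` at time `t`, whose squared norm is the kinetic part of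
the Lyapunov function. -/
noncomputable def anchoredMomentum (β lam : ℝ) (Φ : H → ℝ) (z : H) (x x' : ℝ → H) (t : ℝ) : H :=
  lam • (x t - z) + t • (x' t + β • gradient Φ (x t))

/-- The Lyapunov function `E_λ` at time `t` of a curve `x` with velocity `x'`, relative to the
point `z`; it is used for `z ∈ argmin Φ` and `2 < λ ≤ α - 1`. -/
noncomputable def lyapunov (α β lam : ℝ) (Φ : H → ℝ) (z : H) (x x' : ℝ → H) (t : ℝ) : ℝ :=
  ‖anchoredMomentum β lam Φ z x x' t‖ ^ 2 / 2 + lam * (α - 1 - lam) / 2 * ‖x t - z‖ ^ 2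
    + t * (t - β + (α - 1 - lam) * β) * (Φ (x t) - Φ z)

section Lyapunov

variable {α β t₀ lam : ℝ} {Φ : H → ℝ} {g x x' x'' : ℝ → H} {z : H} {t : ℝ}

lemma lyapunov_sub_lyapunov (mu : ℝ) :
    lyapunov α β lam Φ z x x' t - lyapunov α β mu Φ z x x' t
      = (lam - mu) * ((α - 1) / 2 * ‖x t - z‖ ^ 2
        + t * ⟪x t - z, x' t + β • gradient Φ (x t)⟫ - β * (t * (Φ (x t) - Φ z))) := by
  simp only [lyapunov, anchoredMomentum, norm_add_sq_real, norm_smul, mul_pow, Real.norm_eq_abs,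
    sq_abs, real_inner_smul_left, real_inner_smul_right]
  ring

lemma norm_anchoredMomentum_sq_le_lyapunov (hβ : 0 ≤ β) (hlam : 0 ≤ lam) (hlam' : lam ≤ α - 1)
    (ht : 0 ≤ t) (hβt : β ≤ t) (hz : Φ z ≤ Φ (x t)) :
    ‖anchoredMomentum β lam Φ z x x' t‖ ^ 2 / 2 ≤ lyapunov α β lam Φ z x x' t := by
  have : 0 ≤ α - 1 - lam := sub_nonneg.2 hlam'
  have : 0 ≤ t - β := sub_nonneg.2 hβt
  have : 0 ≤ Φ (x t) - Φ z := sub_nonneg.2 hz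
  rw [lyapunov, add_assoc]
  exact le_add_of_nonneg_right (by positivity)

lemma eventually_lyapunov_nonneg (hβ : 0 ≤ β) (hlam : 0 ≤ lam) (hlam' : lam ≤ α - 1)
    (hz : ∀ w, Φ z ≤ Φ w) : ∀ᶠ t in atTop, 0 ≤ lyapunov α β lam Φ z x x' t := by
  filter_upwards [eventually_ge_atTop 0, eventually_ge_atTop β] with t ht hβt
  exact (by positivity : 0 ≤ ‖anchoredMomentum β lam Φ z x x' t‖ ^ 2 / 2).trans
    (norm_anchoredMomentum_sq_le_lyapunov hβ hlam hlam' ht hβt (hz _))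

lemma mul_sub_le_lyapunov (hβ : 0 ≤ β) (hlam : 0 ≤ lam) (hlam' : lam ≤ α - 1)
    (ht : 0 ≤ t) (hz : Φ z ≤ Φ (x t)) :
    (t - β) * (t * (Φ (x t) - Φ z)) ≤ lyapunov α β lam Φ z x x' t := by
  have : 0 ≤ α - 1 - lam := sub_nonneg.2 hlam'
  have : 0 ≤ Φ (x t) - Φ z := sub_nonneg.2 hz
  have hrest : 0 ≤ ‖anchoredMomentum β lam Φ z x x' t‖ ^ 2 / 2
      + lam * (α - 1 - lam) / 2 * ‖x t - z‖ ^ 2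
      + t * ((α - 1 - lam) * β) * (Φ (x t) - Φ z) := by positivity
  rw [lyapunov]
  linarith

lemma sub_le_inner_gradient (hconv : ConvexOn ℝ univ Φ) (hΦ : Differentiable ℝ Φ) (y : H) :
    Φ y - Φ z ≤ ⟪gradient Φ y, y - z⟫ := by
  have htangent := add_inner_gradient_sub_le_of_convexOn hconv (mem_univ y) (mem_univ z) (hΦ y)
  rw [← neg_sub, inner_neg_right] at htangent
  linarith

lemma inner_gradient_nonneg (hconv : ConvexOn ℝ univ Φ) (hΦ : Differentiable ℝ Φ)
    (hz : ∀ w, Φ z ≤ Φ w) (y : H) : 0 ≤ ⟪gradient Φ y, y - z⟫ :=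
  (sub_nonneg.2 (hz y)).trans (sub_le_inner_gradient hconv hΦ y)

namespace IsPerturbedDINAVDSolution

lemma hasDerivAt_anchoredMomentum (h : IsPerturbedDINAVDSolution α β t₀ Φ g x x' x'')
    (hΦ' : Differentiable ℝ (gradient Φ)) (ht : t₀ ≤ t) (ht0 : t ≠ 0) :
    HasDerivAt (anchoredMomentum β lam Φ z x x')
      (-((α - 1 - lam) • x' t) - (t - β) • gradient Φ (x t) + t • g t) t := by
  have hgrad : HasDerivAt (fun s ↦ gradient Φ (x s)) (fderiv ℝ (gradient Φ) (x t) (x' t)) t :=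
    (hΦ' (x t)).hasFDerivAt.comp_hasDerivAt t (h.hasDerivAt t ht)
  have hderiv := (((h.hasDerivAt t ht).sub_const z).const_smul lam).add
    ((hasDerivAt_id t).smul ((h.hasDerivAt_velocity t ht).add (hgrad.const_smul β)))
  refine hderiv.congr_deriv ?_
  have hfriction : t • (α / t) • x' t = α • x' t := by rw [smul_smul, mul_div_cancel₀ α ht0]
  simp only [id, Pi.add_apply, Pi.smul_apply, ← h.equation t ht, smul_add, hfriction]
  module

lemma hasDerivAt_lyapunov (h : IsPerturbedDINAVDSolution α β t₀ Φ g x x' x'')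
    (hΦ : Differentiable ℝ Φ) (hΦ' : Differentiable ℝ (gradient Φ)) (ht : t₀ ≤ t) (ht0 : t ≠ 0) :
    HasDerivAt (lyapunov α β lam Φ z x x')
      (t * ⟪anchoredMomentum β lam Φ z x x' t, g t⟫
        - lam * (t - β) * ⟪gradient Φ (x t), x t - z⟫
        + (2 * t - β + (α - 1 - lam) * β) * (Φ (x t) - Φ z)
        - (α - 1 - lam) * t * ‖x' t‖ ^ 2 - β * t * (t - β) * ‖gradient Φ (x t)‖ ^ 2) t := by
  have hx : HasDerivAt (fun s ↦ x s - z) (x' t) t := (h.hasDerivAt t ht).sub_const z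
  have hval : HasDerivAt (fun s ↦ Φ (x s) - Φ z) ⟪gradient Φ (x t), x' t⟫ t := by
    rw [inner_gradient_left]
    exact ((hΦ (x t)).hasFDerivAt.comp_hasDerivAt t (h.hasDerivAt t ht)).sub_const (Φ z)
  have hcoef : HasDerivAt (fun s ↦ s * (s - β + (α - 1 - lam) * β))
      (2 * t - β + (α - 1 - lam) * β) t := by
    refine ((hasDerivAt_id t).mul (((hasDerivAt_id t).sub_const β).add_const _)).congr_deriv ?_
    simp only [id]
    ring
  have hv := h.hasDerivAt_anchoredMomentum (lam := lam) (z := z) hΦ' ht ht0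
  have hderiv := ((hv.norm_sq.div_const 2).add
    (hx.norm_sq.const_mul (lam * (α - 1 - lam) / 2))).add (hcoef.mul hval)
  refine hderiv.congr_deriv ?_
  simp only [anchoredMomentum, inner_add_left, inner_add_right, inner_sub_right, inner_neg_right,
    real_inner_smul_left, real_inner_smul_right, real_inner_self_eq_norm_sq,
    real_inner_comm (gradient Φ (x t)), smul_add, smul_smul]
  ring

lemma deriv_lyapunov_le (h : IsPerturbedDINAVDSolution α β t₀ Φ g x x' x'')
    (hconv : ConvexOn ℝ univ Φ) (hΦ : Differentiable ℝ Φ) (hΦ' : Differentiable ℝ (gradient Φ))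
    (hβ : 0 ≤ β) (hlam : 0 ≤ lam) (hlam' : lam ≤ α - 1) (hz : Φ z ≤ Φ (x t))
    (ht : t₀ ≤ t) (ht0 : 0 < t) (hβt : β ≤ t) (hlarge : 1 + (α - 1) * β ≤ (lam - 2) * t) :
    deriv (lyapunov α β lam Φ z x x') t
      ≤ t * ‖g t‖ * (1 + lyapunov α β lam Φ z x x' t) - ⟪gradient Φ (x t), x t - z⟫ := by
  set v := anchoredMomentum β lam Φ z x x' t
  have hgap : Φ (x t) - Φ z ≤ ⟪gradient Φ (x t), x t - z⟫ := sub_le_inner_gradient hconv hΦ _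
  have hD : 0 ≤ ⟪gradient Φ (x t), x t - z⟫ := (sub_nonneg.2 hz).trans hgap
  have hκ : 0 ≤ α - 1 - lam := sub_nonneg.2 hlam'
  have : 0 ≤ t - β := sub_nonneg.2 hβt
  have hv : ‖v‖ ≤ 1 + lyapunov α β lam Φ z x x' t := by
    have hE := norm_anchoredMomentum_sq_le_lyapunov (x' := x') hβ hlam hlam' ht0.le hβt hz
    linarith [sq_nonneg (‖v‖ - 1)]
  have hsource : t * ⟪v, g t⟫ ≤ t * ‖g t‖ * (1 + lyapunov α β lam Φ z x x' t) :=
    calc t * ⟪v, g t⟫ ≤ t * (‖v‖ * ‖g t‖) := by gcongr; exact real_inner_le_norm _ _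
      _ = t * ‖g t‖ * ‖v‖ := by ring
      _ ≤ t * ‖g t‖ * (1 + lyapunov α β lam Φ z x x' t) := by gcongr
  have hpotential : (2 * t - β + (α - 1 - lam) * β) * (Φ (x t) - Φ z)
      ≤ (2 * t - β + (α - 1 - lam) * β) * ⟪gradient Φ (x t), x t - z⟫ := by
    have : 0 ≤ 2 * t - β + (α - 1 - lam) * β := by linarith [mul_nonneg hκ hβ]
    gcongr
  have habsorb : (2 * t - β + (α - 1 - lam) * β) * ⟪gradient Φ (x t), x t - z⟫
      ≤ (lam * (t - β) - 1) * ⟪gradient Φ (x t), x t - z⟫ := by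
    refine mul_le_mul_of_nonneg_right ?_ hD
    linarith
  have hspeed : 0 ≤ (α - 1 - lam) * t * ‖x' t‖ ^ 2 := by positivity
  have hforce : 0 ≤ β * t * (t - β) * ‖gradient Φ (x t)‖ ^ 2 := by positivity
  rw [(h.hasDerivAt_lyapunov hΦ hΦ' ht ht0.ne').deriv]
  linarith

lemma eventually_differentiableAt_lyapunov (h : IsPerturbedDINAVDSolution α β t₀ Φ g x x' x'')
    (hΦ : Differentiable ℝ Φ) (hΦ' : Differentiable ℝ (gradient Φ)) :
    ∀ᶠ t in atTop, DifferentiableAt ℝ (lyapunov α β lam Φ z x x') t := by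
  filter_upwards [eventually_ge_atTop t₀, eventually_gt_atTop 0] with t ht ht0
  exact (h.hasDerivAt_lyapunov hΦ hΦ' ht ht0.ne').differentiableAt

lemma eventually_deriv_lyapunov_le (h : IsPerturbedDINAVDSolution α β t₀ Φ g x x' x'')
    (hconv : ConvexOn ℝ univ Φ) (hΦ : Differentiable ℝ Φ) (hΦ' : Differentiable ℝ (gradient Φ))
    (hβ : 0 ≤ β) (hlam : 2 < lam) (hlam' : lam ≤ α - 1) (hz : ∀ w, Φ z ≤ Φ w) :
    ∀ᶠ t in atTop, deriv (lyapunov α β lam Φ z x x') t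
      ≤ t * ‖g t‖ * (1 + lyapunov α β lam Φ z x x' t) - ⟪gradient Φ (x t), x t - z⟫ := by
  filter_upwards [eventually_ge_atTop t₀, eventually_gt_atTop 0, eventually_ge_atTop β,
    (tendsto_id.const_mul_atTop (sub_pos.2 hlam)).eventually_ge_atTop (1 + (α - 1) * β)]
    with t ht ht0 hβt hlarge
  exact h.deriv_lyapunov_le hconv hΦ hΦ' hβ (by linarith) hlam' (hz _) ht ht0 hβt hlarge

lemma exists_tendsto_lyapunov (h : IsPerturbedDINAVDSolution α β t₀ Φ g x x' x'')
    (hconv : ConvexOn ℝ univ Φ) (hΦ : Differentiable ℝ Φ) (hΦ' : Differentiable ℝ (gradient Φ))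
    (hg : IntegrableOn (fun t ↦ t * ‖g t‖) (Ici t₀)) (hβ : 0 ≤ β) (hlam : 2 < lam)
    (hlam' : lam ≤ α - 1) (hz : ∀ w, Φ z ≤ Φ w) :
    ∃ l, Tendsto (lyapunov α β lam Φ z x x') atTop (𝓝 l) := by
  refine exists_tendsto_of_deriv_le_mul_one_add (h.eventually_differentiableAt_lyapunov hΦ hΦ')
    (eventually_lyapunov_nonneg hβ (by linarith) hlam' hz) hg ?_
  filter_upwards [h.eventually_deriv_lyapunov_le hconv hΦ hΦ' hβ hlam hlam' hz] with t ht
  have hD : 0 ≤ ⟪gradient Φ (x t), x t - z⟫ := inner_gradient_nonneg hconv hΦ hz _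
  linarith

lemma continuousOn_inner_gradient (h : IsPerturbedDINAVDSolution α β t₀ Φ g x x' x'')
    (hΦ' : Continuous (gradient Φ)) :
    ContinuousOn (fun t ↦ ⟪gradient Φ (x t), x t - z⟫) (Ici t₀) := by
  have hx : ContinuousOn x (Ici t₀) := fun t ht ↦
    (h.hasDerivAt t ht).continuousAt.continuousWithinAt
  exact (hΦ'.comp_continuousOn hx).inner (hx.sub continuousOn_const)

lemma integrableOn_inner_gradient (h : IsPerturbedDINAVDSolution α β t₀ Φ g x x' x'')
    (hα : 3 < α) (hconv : ConvexOn ℝ univ Φ) (hΦ : Differentiable ℝ Φ)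
    (hΦ' : Differentiable ℝ (gradient Φ)) (hg : IntegrableOn (fun t ↦ t * ‖g t‖) (Ici t₀))
    (hβ : 0 ≤ β) (hz : ∀ w, Φ z ≤ Φ w) :
    IntegrableOn (fun t ↦ ⟪gradient Φ (x t), x t - z⟫) (Ici t₀) :=
  integrableOn_of_deriv_le_mul_one_add_sub (h.eventually_differentiableAt_lyapunov hΦ hΦ')
    (eventually_lyapunov_nonneg hβ (by linarith) le_rfl hz) hg
    (h.continuousOn_inner_gradient hΦ'.continuous)
    (Eventually.of_forall fun t ↦ inner_gradient_nonneg hconv hΦ hz (x t))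
    (h.eventually_deriv_lyapunov_le hconv hΦ hΦ' hβ (by linarith) le_rfl hz)

lemma tendsto_mul_comp_sub_of_isMin (h : IsPerturbedDINAVDSolution α β t₀ Φ g x x' x'')
    (hα : 3 < α) (hconv : ConvexOn ℝ univ Φ) (hΦ : Differentiable ℝ Φ)
    (hΦ' : Differentiable ℝ (gradient Φ)) (hg : IntegrableOn (fun t ↦ t * ‖g t‖) (Ici t₀))
    (hβ : 0 ≤ β) (hz : ∀ w, Φ z ≤ Φ w) :
    Tendsto (fun t ↦ t * (Φ (x t) - Φ z)) atTop (𝓝 0) := by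
  obtain ⟨l, hl⟩ := h.exists_tendsto_lyapunov hconv hΦ hΦ' hg hβ (lam := α - 1) (by linarith)
    le_rfl hz
  have hquot := hl.div_atTop (tendsto_atTop_add_const_right _ (-β) tendsto_id)
  refine tendsto_of_tendsto_of_tendsto_of_le_of_le' tendsto_const_nhds hquot ?_ ?_
  · filter_upwards [eventually_ge_atTop 0] with t ht
    exact mul_nonneg ht (sub_nonneg.2 (hz _))
  · filter_upwards [eventually_ge_atTop 0, eventually_gt_atTop β] with t ht hβt
    rw [id, ← sub_eq_add_neg, le_div_iff₀' (sub_pos.2 hβt)]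
    exact mul_sub_le_lyapunov hβ (by linarith) le_rfl ht (hz _)

lemma tendsto_comp_of_isMin (h : IsPerturbedDINAVDSolution α β t₀ Φ g x x' x'')
    (hα : 3 < α) (hconv : ConvexOn ℝ univ Φ) (hΦ : Differentiable ℝ Φ)
    (hΦ' : Differentiable ℝ (gradient Φ)) (hg : IntegrableOn (fun t ↦ t * ‖g t‖) (Ici t₀))
    (hβ : 0 ≤ β) (hz : ∀ w, Φ z ≤ Φ w) : Tendsto (fun t ↦ Φ (x t)) atTop (𝓝 (Φ z)) := by
  have hprod := tendsto_inv_atTop_zero.mul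
    (h.tendsto_mul_comp_sub_of_isMin hα hconv hΦ hΦ' hg hβ hz)
  rw [mul_zero] at hprod
  refine tendsto_sub_nhds_zero_iff.1 (hprod.congr' ?_)
  filter_upwards [eventually_ne_atTop 0] with t ht
  rw [inv_mul_cancel_left₀ ht]

lemma exists_tendsto_norm_sq_add_mul_inner
    (h : IsPerturbedDINAVDSolution α β t₀ Φ g x x' x'')
    (hα : 3 < α) (hconv : ConvexOn ℝ univ Φ) (hΦ : Differentiable ℝ Φ)
    (hΦ' : Differentiable ℝ (gradient Φ)) (hg : IntegrableOn (fun t ↦ t * ‖g t‖) (Ici t₀))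
    (hβ : 0 ≤ β) (hz : ∀ w, Φ z ≤ Φ w) :
    ∃ l, Tendsto (fun t ↦ (α - 1) / 2 * ‖x t - z‖ ^ 2
      + t * ⟪x t - z, x' t + β • gradient Φ (x t)⟫) atTop (𝓝 l) := by
  obtain ⟨mu, hmu, hmu'⟩ := exists_between (show 2 < α - 1 by linarith)
  obtain ⟨l, hl⟩ := h.exists_tendsto_lyapunov hconv hΦ hΦ' hg hβ (hmu.trans hmu') le_rfl hz
  obtain ⟨m, hm⟩ := h.exists_tendsto_lyapunov hconv hΦ hΦ' hg hβ hmu hmu'.le hz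
  have hslope := ((hl.sub hm).div_const (α - 1 - mu)).add
    ((h.tendsto_mul_comp_sub_of_isMin hα hconv hΦ hΦ' hg hβ hz).const_mul β)
  refine ⟨_, hslope.congr fun t ↦ ?_⟩
  rw [lyapunov_sub_lyapunov, mul_div_cancel_left₀ _ (sub_pos.2 hmu').ne', sub_add_cancel]

lemma hasDerivAt_intervalIntegral_inner_gradient
    (h : IsPerturbedDINAVDSolution α β t₀ Φ g x x' x'') (hΦ' : Continuous (gradient Φ))
    (ht : t₀ < t) :
    HasDerivAt (fun t ↦ ∫ s in t₀..t, ⟪gradient Φ (x s), x s - z⟫)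
      ⟪gradient Φ (x t), x t - z⟫ t := by
  have hD := h.continuousOn_inner_gradient (z := z) hΦ'
  exact intervalIntegral.integral_hasDerivAt_right
    (hD.mono (by rw [uIcc_of_le ht.le]; exact Icc_subset_Ici_self)).intervalIntegrable
    ((hD.mono Ioi_subset_Ici_self).stronglyMeasurableAtFilter isOpen_Ioi t ht)
    (hD.continuousAt (Ici_mem_nhds ht))

lemma exists_tendsto_norm_sub (h : IsPerturbedDINAVDSolution α β t₀ Φ g x x' x'')
    (hα : 3 < α) (hconv : ConvexOn ℝ univ Φ) (hΦ : Differentiable ℝ Φ)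
    (hΦ' : Differentiable ℝ (gradient Φ)) (hg : IntegrableOn (fun t ↦ t * ‖g t‖) (Ici t₀))
    (hβ : 0 ≤ β) (hz : ∀ w, Φ z ≤ Φ w) : ∃ a, Tendsto (fun t ↦ ‖x t - z‖) atTop (𝓝 a) := by
  set W : ℝ → ℝ := fun t ↦ ∫ s in t₀..t, ⟪gradient Φ (x s), x s - z⟫
  have hW : Tendsto W atTop (𝓝 (∫ s in Ioi t₀, ⟪gradient Φ (x s), x s - z⟫)) :=
    intervalIntegral_tendsto_integral_Ioi t₀ ((h.integrableOn_inner_gradient hα hconv hΦ hΦ' hg hβ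
      hz).mono_set Ioi_subset_Ici_self) tendsto_id
  have hp : ∀ᶠ t in atTop, HasDerivAt (fun s ↦ ‖x s - z‖ ^ 2 / 2 + β * W s)
      (⟪x t - z, x' t⟫ + β * ⟪gradient Φ (x t), x t - z⟫) t := by
    filter_upwards [eventually_gt_atTop t₀] with t ht
    refine ((((h.hasDerivAt t ht.le).sub_const z).norm_sq.div_const 2).add
      ((h.hasDerivAt_intervalIntegral_inner_gradient hΦ'.continuous ht).const_mul β)).congr_deriv ?_
    rw [mul_div_cancel_left₀ _ two_ne_zero]
  obtain ⟨l, hl⟩ := h.exists_tendsto_norm_sq_add_mul_inner hα hconv hΦ hΦ' hg hβ hz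
  have hlim : Tendsto (fun t ↦ (α - 1) * (‖x t - z‖ ^ 2 / 2 + β * W t)
      + t * (⟪x t - z, x' t⟫ + β * ⟪gradient Φ (x t), x t - z⟫)) atTop
      (𝓝 (l + (α - 1) * β * ∫ s in Ioi t₀, ⟪gradient Φ (x s), x s - z⟫)) := by
    refine (hl.add (hW.const_mul ((α - 1) * β))).congr fun t ↦ ?_
    rw [inner_add_right, real_inner_smul_right, real_inner_comm (gradient Φ (x t))]
    ring
  have hconverges := tendsto_div_of_tendsto_mul_add_mul_deriv (by linarith) hp hlim
  refine ⟨_, (((hconverges.sub (hW.const_mul β)).const_mul 2).sqrt).congr fun t ↦ ?_⟩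
  rw [add_sub_cancel_right, mul_div_cancel₀ _ two_ne_zero, Real.sqrt_sq (norm_nonneg _)]

end IsPerturbedDINAVDSolution

end Lyapunov

lemma differentiable_gradient_of_contDiff {Φ : H → ℝ} (hΦ : ContDiff ℝ 2 Φ) :
    Differentiable ℝ (gradient Φ) :=
  ((InnerProductSpace.toDual ℝ H).symm.contDiff.comp
    (hΦ.fderiv_right (m := 1) (by norm_num))).differentiable one_ne_zero

theorem stmt19_general (α β t₀ : ℝ) (hα : 3 < α) (hβ : 0 ≤ β)
    (Φ : H → ℝ) (hconv : ConvexOn ℝ univ Φ) (hΦ : Differentiable ℝ Φ)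
    (hΦ' : Differentiable ℝ (gradient Φ)) (hne : ∃ z : H, ∀ w, Φ z ≤ Φ w)
    (g x x' x'' : ℝ → H) (hg : IntegrableOn (fun t ↦ t * ‖g t‖) (Ici t₀))
    (h : IsPerturbedDINAVDSolution α β t₀ Φ g x x' x'') :
    ∃ xinf : H, (∀ w, Φ xinf ≤ Φ w) ∧
      ∀ y : H, Tendsto (fun t ↦ ⟪x t, y⟫) atTop (𝓝 ⟪xinf, y⟫) := by
  refine exists_tendsto_inner_of_tendsto_norm_sub (S := {z | ∀ w, Φ z ≤ Φ w}) hne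
    (fun z hz ↦ h.exists_tendsto_norm_sub hα hconv hΦ hΦ' hg hβ hz) fun U y hU hy w ↦ ?_
  obtain ⟨z, hz⟩ := hne
  have hval : Tendsto (fun t ↦ Φ (x t)) U (𝓝 (Φ z)) :=
    (h.tendsto_comp_of_isMin hα hconv hΦ hΦ' hg hβ hz).mono_left hU
  exact (le_of_tendsto_inner_of_convexOn hconv (Eventually.of_forall fun t ↦ mem_univ _)
    (mem_univ y) (hΦ y) hy hval).trans (hz w)

theorem stmt19 (α β t₀ : ℝ) (hα : 3 < α) (hβ : 0 < β) (ht₀ : 0 < t₀)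
    (Φ : H → ℝ) (hconv : ConvexOn ℝ Set.univ Φ) (hΦ : ContDiff ℝ 2 Φ)
    (hne : ∃ z : H, ∀ w, Φ z ≤ Φ w)
    (hlip : ∀ s : Set H, Bornology.IsBounded s →
      ∃ K : NNReal, LipschitzOnWith K (gradient Φ) s)
    (g : ℝ → H) (hg : ContinuousOn g (Set.Ici t₀))
    (hgint : IntegrableOn (fun t => t * ‖g t‖) (Set.Ici t₀))
    (x x' x'' : ℝ → H)
    (hx' : ∀ t ∈ Set.Ici t₀, HasDerivAt x (x' t) t)
    (hx'' : ∀ t ∈ Set.Ici t₀, HasDerivAt x' (x'' t) t)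
    (hcont : ContinuousOn x'' (Set.Ici t₀))
    (heq : ∀ t ∈ Set.Ici t₀,
      x'' t + (α / t) • x' t + β • (fderiv ℝ (gradient Φ) (x t)) (x' t)
        + gradient Φ (x t) = g t) :
    ∃ xinf : H, (∀ w, Φ xinf ≤ Φ w) ∧
      ∀ y : H, Tendsto (fun t => ⟪x t, y⟫) atTop (𝓝 ⟪xinf, y⟫) :=
  stmt19_general α β t₀ hα hβ.le Φ hconv (hΦ.differentiable two_ne_zero)
    (differentiable_gradient_of_contDiff hΦ) hne g x x' x'' hgint ⟨hx', hx'', heq⟩
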